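/- Let A be an e-cyclic residuated lattice, with ~a := a\e (= e/a). If A satisfies ~(a\b) = ~b/~a for all a, b ∈ A, then A is integrally closed, i.e., a\a = e and a/a = e for all a ∈ A. -/

import Mathlib

/-- A residuated lattice: a lattice-ordered monoid with left and right residuals,
i.e. `b ≤ a\c ↔ a*b ≤ c ↔ a ≤ c/b`.  `ldiv a c` denotes `a\c` and `rdiv c b` denotes `c/b`. -/
class ResiduatedLattice (α : Type*) extends Lattice α, Monoid α where
  ldiv : α → α → α
  rdiv : α → α → α
  le_ldiv_iff : ∀ a b c : α, b ≤ ldiv a c ↔ a * b ≤ c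
  le_rdiv_iff : ∀ a b c : α, a ≤ rdiv c b ↔ a * b ≤ c

open ResiduatedLattice

/-!
At `b = a` the identity `~(a\b) = ~b/~a` reads `~(a\a) = ~a/~a ≥ 1`, that is, `a\a ≤ 1`.
The other residual follows because `x := a/a` satisfies `x * x ≤ x`, hence `x ≤ x\x = 1`.
-/

namespace ResiduatedLattice

variable {α : Type*} [ResiduatedLattice α]

instance : MulLeftMono α where
  elim a _ c hbc := (le_ldiv_iff a _ _).1 (hbc.trans ((le_ldiv_iff a c _).2 le_rfl))

theorem one_le_ldiv_iff {a b : α} : 1 ≤ ldiv a b ↔ a ≤ b := by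
  rw [le_ldiv_iff, mul_one]

theorem one_le_rdiv_iff {a b : α} : 1 ≤ rdiv b a ↔ a ≤ b := by
  rw [le_rdiv_iff, one_mul]

theorem one_le_ldiv_self (a : α) : 1 ≤ ldiv a a :=
  one_le_ldiv_iff.2 le_rfl

theorem one_le_rdiv_self (a : α) : 1 ≤ rdiv a a :=
  one_le_rdiv_iff.2 le_rfl

theorem rdiv_mul_le (a b : α) : rdiv a b * b ≤ a :=
  (le_rdiv_iff _ _ _).1 le_rfl

theorem rdiv_mul_rdiv_le (a b c : α) : rdiv a b * rdiv b c ≤ rdiv a c := by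
  rw [le_rdiv_iff]
  calc
    rdiv a b * rdiv b c * c = rdiv a b * (rdiv b c * c) := mul_assoc _ _ _
    _ ≤ rdiv a b * b := by gcongr; exact rdiv_mul_le b c
    _ ≤ a := rdiv_mul_le a b

theorem rdiv_self_eq_one_of_ldiv_self_eq_one (h : ∀ a : α, ldiv a a = 1) (a : α) :
    rdiv a a = 1 := by
  refine le_antisymm ?_ (one_le_rdiv_self a)
  calc
    rdiv a a ≤ ldiv (rdiv a a) (rdiv a a) := (le_ldiv_iff _ _ _).2 (rdiv_mul_rdiv_le a a a)
    _ = 1 := h (rdiv a a)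

end ResiduatedLattice

theorem integrally_closed_of_not_ldiv_eq_general {α : Type*} [ResiduatedLattice α]
    (h : ∀ a : α, rdiv (ldiv a 1) (ldiv a 1) ≤ ldiv (ldiv a a) 1) :
    ∀ a : α, ldiv a a = 1 ∧ rdiv a a = 1 := by
  have ldiv_self_le_one (a : α) : ldiv a a ≤ 1 :=
    one_le_ldiv_iff.1 ((one_le_rdiv_self (ldiv a 1)).trans (h a))
  have ldiv_self_eq_one (a : α) : ldiv a a = 1 :=
    le_antisymm (ldiv_self_le_one a) (one_le_ldiv_self a)
  exact fun a => ⟨ldiv_self_eq_one a, rdiv_self_eq_one_of_ldiv_self_eq_one ldiv_self_eq_one a⟩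

/-- An e-cyclic residuated lattice satisfying `~(x\y) ≈ ~y/~x` is integrally closed. -/
theorem integrally_closed_of_not_ldiv_eq {α : Type*} [ResiduatedLattice α]
    (hcyc : ∀ a : α, ldiv a 1 = rdiv 1 a)
    (h : ∀ a b : α, ldiv (ldiv a b) 1 = rdiv (ldiv b 1) (ldiv a 1)) :
    ∀ a : α, ldiv a a = 1 ∧ rdiv a a = 1 :=
  integrally_closed_of_not_ldiv_eq_general fun a => (h a a).ge
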